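/- Let γ ∈ ℝ be a finite corner of the min-plus characteristic polynomial P_A, let (U,V) be any Hungarian pair with respect to the matrix Â(γ), and let a^{(γ)} = a_0^{G_0} + X a_1^{G_1} + ⋯ + X^d a_d^{G_d} be the auxiliary pencil built with the graphs G_k = Sat_k(γ,U,V). If the polynomial det(a^{(γ)}) ∈ ℂ[X] has nonzero roots λ_1, …, λ_m, listed with multiplicity, then there exist ε₀ > 0 and functions L_1, …, L_m : (0, ε₀) → ℂ such that for every ε ∈ (0, ε₀) the multiset {L_1(ε), …, L_m(ε)} is a sub-multiset of the multiset of roots of det(𝒜_ε) (counted with multiplicity), and ε^{−γ} L_i(ε) → λ_i as ε → 0⁺ for every i = 1, …, m. -/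

import Mathlib

open Polynomial Filter Topology Finset

noncomputable section

/-- The min-plus semiring `ℝ ∪ {+∞}`, with `min` as addition and `+` as
multiplication (so `⊤ = +∞` is the min-plus zero `𝟘`). -/
abbrev Rmin := WithTop ℝ

/-- Min-plus permanent of a matrix: `perm B = min_σ Σ_i B_{i σ(i)}`. -/
def mpPerm {n : ℕ} (B : Matrix (Fin n) (Fin n) Rmin) : Rmin :=
  Finset.univ.inf fun σ : Equiv.Perm (Fin n) => ∑ i, B i (σ i)

/-- Coefficient of `X^m` in the min-plus characteristic polynomial
`P_A = perm (A_0 ⊕ X A_1 ⊕ ⋯ ⊕ X^d A_d)`: expanding the min-plus permanent of the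
pencil, the coefficient of `X^m` is the min over permutations `σ` and over
exponent choices `κ : Fin n → Fin (d+1)` with `Σ_i κ i = m` of `Σ_i (A_{κ i})_{i σ(i)}`. -/
def PAcoeff {n d : ℕ} (A : Fin (d + 1) → Matrix (Fin n) (Fin n) Rmin) (m : ℕ) : Rmin :=
  Finset.univ.inf fun σ : Equiv.Perm (Fin n) =>
    (Finset.univ.filter fun κ : Fin n → Fin (d + 1) => ∑ i, (κ i : ℕ) = m).inf
      fun κ => ∑ i, A (κ i) i (σ i)

/-- The polynomial function `P̂_A(γ) = min_m (P_m + m γ)` associated with the formal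
min-plus characteristic polynomial `P_A` (whose degree is at most `n * d`). -/
def PAhat {n d : ℕ} (A : Fin (d + 1) → Matrix (Fin n) (Fin n) Rmin) (γ : ℝ) : Rmin :=
  (Finset.range (n * d + 1)).inf fun m => PAcoeff A m + (((m : ℝ) * γ : ℝ) : Rmin)

/-- The set of exponents `m` achieving the minimum in `P̂_A(γ)` with a finite
coefficient (the "active" slopes of the concave piecewise linear function `P̂_A` at `γ`). -/
def activeSet {n d : ℕ} (A : Fin (d + 1) → Matrix (Fin n) (Fin n) Rmin) (γ : ℝ) : Finset ℕ :=
  (Finset.range (n * d + 1)).filter fun m =>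
    PAcoeff A m ≠ ⊤ ∧ PAcoeff A m + (((m : ℝ) * γ : ℝ) : Rmin) = PAhat A γ

/-- `γ ∈ ℝ` is a finite corner of `P_A` iff the piecewise linear concave function `P̂_A`
is not differentiable at `γ`, i.e. at least two distinct slopes are active at `γ`. -/
def IsFiniteCorner {n d : ℕ} (A : Fin (d + 1) → Matrix (Fin n) (Fin n) Rmin) (γ : ℝ) : Prop :=
  ∃ m₁ ∈ activeSet A γ, ∃ m₂ ∈ activeSet A γ, m₁ ≠ m₂

/-- Multiplicity of a finite corner `γ`: `P̂_A'(γ⁻) - P̂_A'(γ⁺)`, i.e. the largest active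
slope minus the smallest active slope at `γ`. -/
def cornerMult {n d : ℕ} (A : Fin (d + 1) → Matrix (Fin n) (Fin n) Rmin) (γ : ℝ) : ℕ :=
  (activeSet A γ).sup id - ((activeSet A γ).min).getD 0

/-- Valuation of `P_A`: smallest `k` whose coefficient is `≠ 𝟘`; this is the
multiplicity of the corner `𝟘 = +∞`. -/
def PAval {n d : ℕ} (A : Fin (d + 1) → Matrix (Fin n) (Fin n) Rmin) : ℕ :=
  sInf {m | PAcoeff A m ≠ ⊤}

/-- Degree of `P_A`: largest `k` whose coefficient is `≠ 𝟘`. -/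
def PAdeg {n d : ℕ} (A : Fin (d + 1) → Matrix (Fin n) (Fin n) Rmin) : ℕ :=
  sSup {m | PAcoeff A m ≠ ⊤}

/-- The matrix `Â(γ)`, with entries `Â_{ij}(γ) = min_{0 ≤ k ≤ d} ((A_k)_{ij} + k γ)`. -/
def AhatMat {n d : ℕ} (A : Fin (d + 1) → Matrix (Fin n) (Fin n) Rmin) (γ : ℝ) :
    Matrix (Fin n) (Fin n) Rmin :=
  fun i j => Finset.univ.inf fun k : Fin (d + 1) => A k i j + ((((k : ℕ) : ℝ) * γ : ℝ) : Rmin)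

/-- `(i,j)` is an arc of the digraph `Opt(B)` of arcs belonging to optimal assignments. -/
def OptArc {n : ℕ} (B : Matrix (Fin n) (Fin n) Rmin) (i j : Fin n) : Prop :=
  ∃ σ : Equiv.Perm (Fin n), σ i = j ∧ (∑ l, B l (σ l)) = mpPerm B

/-- `(i,j)` is an arc of the digraph `Opt_k(γ)`. -/
def OptK {n d : ℕ} (A : Fin (d + 1) → Matrix (Fin n) (Fin n) Rmin) (γ : ℝ)
    (k : Fin (d + 1)) (i j : Fin n) : Prop :=
  OptArc (AhatMat A γ) i j ∧ A k i j + ((((k : ℕ) : ℝ) * γ : ℝ) : Rmin) = AhatMat A γ i j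

/-- `(U, V)` is a Hungarian pair with respect to `B`. -/
def HungarianPair {n : ℕ} (B : Matrix (Fin n) (Fin n) Rmin) (U V : Fin n → ℝ) : Prop :=
  (∀ i j, ((U i + V j : ℝ) : Rmin) ≤ B i j) ∧
    (((∑ i, U i) + ∑ j, V j : ℝ) : Rmin) = mpPerm B

/-- `(i,j)` is an arc of the saturation graph `Sat(B,U,V)`. -/
def SatArc {n : ℕ} (B : Matrix (Fin n) (Fin n) Rmin) (U V : Fin n → ℝ) (i j : Fin n) : Prop :=
  B i j = ((U i + V j : ℝ) : Rmin)

/-- `(i,j)` is an arc of the digraph `Sat_k(γ, U, V)`. -/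
def SatK {n d : ℕ} (A : Fin (d + 1) → Matrix (Fin n) (Fin n) Rmin) (γ : ℝ)
    (U V : Fin n → ℝ) (k : Fin (d + 1)) (i j : Fin n) : Prop :=
  SatArc (AhatMat A γ) U V i j ∧
    A k i j + ((((k : ℕ) : ℝ) * γ : ℝ) : Rmin) = AhatMat A γ i j

open Classical in
/-- `b^G` : keep the entries of `b` on the arcs of the digraph `G`, set others to `0`. -/
def restrictG {n : ℕ} (b : Matrix (Fin n) (Fin n) ℂ) (G : Fin n → Fin n → Prop) :
    Matrix (Fin n) (Fin n) ℂ :=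
  fun i j => if G i j then b i j else 0

/-- The auxiliary pencil `a^{(γ)} = a_0^{G_0} + X a_1^{G_1} + ⋯ + X^d a_d^{G_d}`
built from digraphs `G_0, …, G_d`, as a matrix of polynomials in `ℂ[X]`. -/
def auxPencil {n d : ℕ} (a : Fin (d + 1) → Matrix (Fin n) (Fin n) ℂ)
    (G : Fin (d + 1) → Fin n → Fin n → Prop) : Matrix (Fin n) (Fin n) (Polynomial ℂ) :=
  fun i j => ∑ k : Fin (d + 1), Polynomial.C (restrictG (a k) (G k) i j) * X ^ (k : ℕ)

/-- The polynomial `det 𝒜_ε ∈ ℂ[X]` of the perturbed pencil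
`𝒜_ε = 𝒜_{ε,0} + X 𝒜_{ε,1} + ⋯ + X^d 𝒜_{ε,d}`, whose roots are the eigenvalues. -/
def pencilPoly {n d : ℕ} (𝒜 : ℝ → Fin (d + 1) → Matrix (Fin n) (Fin n) ℂ) (ε : ℝ) :
    Polynomial ℂ :=
  Matrix.det fun i j => ∑ k : Fin (d + 1), Polynomial.C (𝒜 ε k i j) * X ^ (k : ℕ)

/-- The perturbed pencil `𝒜_ε` has the asymptotics given by `(a_k, A_k)`:
`(𝒜_{ε,k})_{ij} = (a_k)_{ij} ε^{(A_k)_{ij}} + o(ε^{(A_k)_{ij}})` as `ε → 0⁺`,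
where `(A_k)_{ij} = +∞` means that the entry vanishes in a neighborhood of `0`. -/
def HasAsymptotics {n d : ℕ} (𝒜 : ℝ → Fin (d + 1) → Matrix (Fin n) (Fin n) ℂ)
    (a : Fin (d + 1) → Matrix (Fin n) (Fin n) ℂ)
    (A : Fin (d + 1) → Matrix (Fin n) (Fin n) Rmin) : Prop :=
  ∀ k i j,
    (A k i j = ⊤ → ∀ᶠ ε in 𝓝[>] (0 : ℝ), 𝒜 ε k i j = 0) ∧
    (∀ t : ℝ, A k i j = (t : Rmin) →
      (fun ε : ℝ => 𝒜 ε k i j - a k i j * ((ε ^ t : ℝ) : ℂ)) =o[𝓝[>] (0 : ℝ)]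
        fun ε : ℝ => (ε ^ t : ℝ))

/-- If every root of `p` lies at distance at least `δ` from `μ`, then the values of `p` are
controlled by its value at `μ`. -/
theorem norm_eval_le_of_forall_roots_dist {p : ℂ[X]} {N : ℕ} (hp : p.natDegree ≤ N)
    {μ : ℂ} {δ : ℝ} (hδ : 0 < δ) (h : ∀ r ∈ p.roots, δ ≤ ‖μ - r‖) (z : ℂ) :
    ‖p.eval z‖ ≤ ‖p.eval μ‖ * (1 + ‖z - μ‖ / δ) ^ N := by
  have hbase : 1 ≤ 1 + ‖z - μ‖ / δ := le_add_of_nonneg_right (by positivity)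
  have key : ∀ s : Multiset ℂ, (∀ r ∈ s, δ ≤ ‖μ - r‖) →
      ‖(s.map (z - ·)).prod‖ ≤ ‖(s.map (μ - ·)).prod‖ * (1 + ‖z - μ‖ / δ) ^ s.card := by
    intro s
    induction s using Multiset.induction_on with
    | empty => simp
    | cons r s ih =>
      intro hs
      have hr : δ ≤ ‖μ - r‖ := hs r (Multiset.mem_cons_self r s)
      have hzr : ‖z - r‖ ≤ ‖μ - r‖ * (1 + ‖z - μ‖ / δ) := by
        have htri : ‖z - r‖ ≤ ‖z - μ‖ + ‖μ - r‖ := norm_sub_le_norm_sub_add_norm_sub _ _ _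
        have hquot : ‖z - μ‖ ≤ ‖μ - r‖ * (‖z - μ‖ / δ) := by
          calc ‖z - μ‖ = δ * (‖z - μ‖ / δ) := by field_simp
            _ ≤ ‖μ - r‖ * (‖z - μ‖ / δ) := by gcongr
        linarith
      have ih' := ih fun r' hr' => hs r' (Multiset.mem_cons_of_mem hr')
      simp only [Multiset.map_cons, Multiset.prod_cons, norm_mul, Multiset.card_cons]
      calc ‖z - r‖ * ‖(s.map (z - ·)).prod‖
          ≤ (‖μ - r‖ * (1 + ‖z - μ‖ / δ)) *
              (‖(s.map (μ - ·)).prod‖ * (1 + ‖z - μ‖ / δ) ^ s.card) := by gcongr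
        _ = _ := by ring
  have hsplit := IsAlgClosed.splits p
  have hcard : p.roots.card ≤ N := (p.card_roots').trans hp
  rw [hsplit.eval_eq_prod_roots z, hsplit.eval_eq_prod_roots μ, norm_mul, norm_mul, mul_assoc]
  gcongr
  refine (key _ h).trans ?_
  gcongr

/-- Coefficientwise convergence with bounded degree implies pointwise convergence. -/
theorem tendsto_eval_of_tendsto_coeff {ι : Type*} {l : Filter ι} {p : ι → ℂ[X]} {q : ℂ[X]}
    {N : ℕ} (hp : ∀ e, (p e).natDegree ≤ N) (hq : q.natDegree ≤ N)
    (hpq : ∀ k, Tendsto (fun e => (p e).coeff k) l (𝓝 (q.coeff k))) (z : ℂ) :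
    Tendsto (fun e => (p e).eval z) l (𝓝 (q.eval z)) := by
  simp only [fun e => eval_eq_sum_range' (Nat.lt_succ_of_le (hp e)) z,
    eval_eq_sum_range' (Nat.lt_succ_of_le hq) z]
  exact tendsto_finsetSum _ fun k _ => (hpq k).mul_const _

/-- A root of a coefficientwise limit is a limit of roots. -/
theorem exists_tendsto_root {ι : Type*} {l : Filter ι} {p : ι → ℂ[X]} {q : ℂ[X]}
    {N : ℕ} (hp : ∀ e, (p e).natDegree ≤ N) (hq : q.natDegree ≤ N)
    (hpq : ∀ k, Tendsto (fun e => (p e).coeff k) l (𝓝 (q.coeff k))) (hq0 : q ≠ 0)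
    {μ : ℂ} (hμ : q.IsRoot μ) :
    ∃ M : ι → ℂ, Tendsto M l (𝓝 μ) ∧ ∀ᶠ e in l, M e ∈ (p e).roots := by
  obtain ⟨z, hz⟩ : ∃ z, q.eval z ≠ 0 := by
    by_contra! h
    exact hq0 (Polynomial.funext fun z => by simpa using h z)
  have hroot : ∀ δ > 0, ∀ᶠ e in l, ∃ r ∈ (p e).roots, ‖μ - r‖ < δ := by
    intro δ hδ
    have hbound : Tendsto (fun e => ‖(p e).eval μ‖ * (1 + ‖z - μ‖ / δ) ^ N) l (𝓝 0) := by
      have := ((tendsto_eval_of_tendsto_coeff hp hq hpq μ).norm).mul_const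
        ((1 + ‖z - μ‖ / δ) ^ N)
      simpa [hμ.eq_zero] using this
    have hval := (tendsto_eval_of_tendsto_coeff hp hq hpq z).norm
    filter_upwards [hbound.eventually_lt hval (norm_pos_iff.mpr hz)] with e he
    by_contra! h
    exact absurd (norm_eval_le_of_forall_roots_dist (hp e) hδ h z) (not_le.mpr he)
  have hmin : ∀ e, ∃ x : ℂ, (p e).roots ≠ 0 →
      x ∈ (p e).roots ∧ ∀ r ∈ (p e).roots, ‖μ - x‖ ≤ ‖μ - r‖ := by
    intro e
    by_cases h : (p e).roots = 0
    · exact ⟨0, fun h' => absurd h h'⟩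
    · obtain ⟨r, hr⟩ := Multiset.exists_mem_of_ne_zero h
      obtain ⟨x, hx, hx'⟩ := (p e).roots.toFinset.exists_min_image (fun x => ‖μ - x‖)
        ⟨r, by simpa using hr⟩
      exact ⟨x, fun _ => ⟨Multiset.mem_toFinset.mp hx,
        fun r hr => hx' r (Multiset.mem_toFinset.mpr hr)⟩⟩
  choose M hM using hmin
  refine ⟨M, ?_, ?_⟩
  · rw [Metric.tendsto_nhds]
    intro δ hδ
    filter_upwards [hroot δ hδ] with e ⟨r, hr, hrδ⟩
    have := (hM e fun h => by simp [h] at hr).2 r hr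
    rw [dist_comm, dist_eq_norm]
    exact this.trans_lt hrδ
  · filter_upwards [hroot 1 one_pos] with e ⟨r, hr, _⟩
    exact (hM e fun h => by simp [h] at hr).1

/-- Synthetic division by `X - C (M e)` preserves coefficientwise convergence. -/
theorem tendsto_coeff_divByMonic_X_sub_C {ι : Type*} {l : Filter ι} {p : ι → ℂ[X]} {q : ℂ[X]}
    {N : ℕ} (hp : ∀ e, (p e).natDegree ≤ N) (hq : q.natDegree ≤ N)
    (hpq : ∀ k, Tendsto (fun e => (p e).coeff k) l (𝓝 (q.coeff k)))
    {M : ι → ℂ} {μ : ℂ} (hM : Tendsto M l (𝓝 μ)) (k : ℕ) :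
    Tendsto (fun e => (p e /ₘ (X - C (M e))).coeff k) l (𝓝 ((q /ₘ (X - C μ)).coeff k)) := by
  have hcoeff : ∀ (f : ℂ[X]) (x : ℂ), f.natDegree ≤ N → (f /ₘ (X - C x)).coeff k =
      ∑ i ∈ Finset.Icc (k + 1) N, x ^ (i - (k + 1)) * f.coeff i := by
    intro f x hf
    rw [coeff_divByMonic_X_sub_C]
    refine Finset.sum_subset (Finset.Icc_subset_Icc_right hf) fun i hi hi' => ?_
    rw [coeff_eq_zero_of_natDegree_lt, mul_zero]
    simp only [Finset.mem_Icc] at hi hi'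
    omega
  simp only [fun e => hcoeff (p e) (M e) (hp e), hcoeff q μ hq]
  exact tendsto_finsetSum _ fun i _ => (hM.pow _).mul (hpq i)

theorem roots_eq_cons_of_mem_roots {p : ℂ[X]} {x : ℂ} (hx : x ∈ p.roots) :
    p.roots = x ::ₘ (p /ₘ (X - C x)).roots := by
  have hp0 : p ≠ 0 := ne_zero_of_mem_roots hx
  have hmul := mul_divByMonic_eq_iff_isRoot.mpr (isRoot_of_mem_roots hx)
  have hne : (X - C x) * (p /ₘ (X - C x)) ≠ 0 := by rwa [hmul]
  conv_lhs => rw [← hmul]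
  rw [roots_mul hne, roots_X_sub_C, Multiset.singleton_add]

/-- Continuity of roots: any family of roots of a nonzero coefficientwise limit `q` of polynomials
of bounded degree is the limit of a family of roots. -/
theorem exists_tendsto_roots {ι : Type*} {l : Filter ι} {N : ℕ} (m : ℕ) :
    ∀ (p : ι → ℂ[X]) (q : ℂ[X]), (∀ e, (p e).natDegree ≤ N) → q.natDegree ≤ N →
    (∀ k, Tendsto (fun e => (p e).coeff k) l (𝓝 (q.coeff k))) → q ≠ 0 →
    ∀ lam : Fin m → ℂ, Multiset.map lam Finset.univ.val ≤ q.roots →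
    ∃ L : Fin m → ι → ℂ,
      (∀ᶠ e in l, Multiset.map (fun i => L i e) Finset.univ.val ≤ (p e).roots) ∧
      ∀ i, Tendsto (L i) l (𝓝 (lam i)) := by
  induction m with
  | zero => exact fun p q _ _ _ _ lam _ => ⟨fun _ _ => 0, by simp, fun i => i.elim0⟩
  | succ m ih =>
    intro p q hp hq hpq hq0 lam hlam
    have hcons : ∀ f : Fin (m + 1) → ℂ, Multiset.map f Finset.univ.val =
        f 0 ::ₘ Multiset.map (fun i : Fin m => f i.succ) Finset.univ.val := by
      intro f
      simp [Fin.univ_val_map, List.ofFn_succ]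
    rw [hcons] at hlam
    have hmem : lam 0 ∈ q.roots := Multiset.mem_of_le hlam (Multiset.mem_cons_self _ _)
    obtain ⟨M, hM, hMroot⟩ := exists_tendsto_root hp hq hpq hq0 (isRoot_of_mem_roots hmem)
    have hdeg : ∀ (f : ℂ[X]) (x : ℂ), f.natDegree ≤ N → (f /ₘ (X - C x)).natDegree ≤ N :=
      fun f x hf => by
        rw [natDegree_divByMonic f (monic_X_sub_C x)]
        omega
    have hq'0 : q /ₘ (X - C (lam 0)) ≠ 0 := by
      intro h
      have := mul_divByMonic_eq_iff_isRoot.mpr (isRoot_of_mem_roots hmem)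
      rw [h, mul_zero] at this
      exact hq0 this.symm
    rw [roots_eq_cons_of_mem_roots hmem, Multiset.cons_le_cons_iff] at hlam
    obtain ⟨L, hL, hLlim⟩ := ih (fun e => p e /ₘ (X - C (M e))) (q /ₘ (X - C (lam 0)))
      (fun e => hdeg _ _ (hp e)) (hdeg _ _ hq)
      (tendsto_coeff_divByMonic_X_sub_C hp hq hpq hM) hq'0 (fun i => lam i.succ) hlam
    refine ⟨Fin.cons M L, ?_, fun i => ?_⟩
    · filter_upwards [hL, hMroot] with e he he'
      rw [hcons, roots_eq_cons_of_mem_roots he']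
      exact (Multiset.cons_le_cons_iff _).mpr he
    · refine Fin.cases ?_ (fun i => ?_) i
      · simpa using hM
      · simpa using hLlim i

theorem tendsto_coeff_prod {ι κ : Type*} {l : Filter ι} (s : Finset κ) {f : ι → κ → ℂ[X]}
    {g : κ → ℂ[X]}
    (h : ∀ i ∈ s, ∀ k, Tendsto (fun e => (f e i).coeff k) l (𝓝 ((g i).coeff k))) (k : ℕ) :
    Tendsto (fun e => (∏ i ∈ s, f e i).coeff k) l (𝓝 ((∏ i ∈ s, g i).coeff k)) := by
  classical
  induction s using Finset.induction_on generalizing k with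
  | empty => simpa using tendsto_const_nhds
  | insert i s hi ih =>
    simp only [Finset.prod_insert hi, coeff_mul]
    exact tendsto_finsetSum _ fun x _ => (h i (Finset.mem_insert_self i s) _).mul
      (ih (fun j hj => h j (Finset.mem_insert_of_mem hj)) _)

/-- The determinant of polynomial matrices is continuous for coefficientwise convergence. -/
theorem tendsto_coeff_det {ι : Type*} {l : Filter ι} {n : ℕ}
    {f : ι → Matrix (Fin n) (Fin n) ℂ[X]} {g : Matrix (Fin n) (Fin n) ℂ[X]}
    (h : ∀ i j k, Tendsto (fun e => (f e i j).coeff k) l (𝓝 ((g i j).coeff k))) (k : ℕ) :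
    Tendsto (fun e => (f e).det.coeff k) l (𝓝 (g.det.coeff k)) := by
  simp only [Matrix.det_apply, finsetSum_coeff, coeff_smul]
  exact tendsto_finsetSum _ fun σ _ =>
    (tendsto_coeff_prod _ (fun i _ => h (σ i) i) k).const_smul _

theorem natDegree_det_le {n d : ℕ} {g : Matrix (Fin n) (Fin n) ℂ[X]}
    (h : ∀ i j, (g i j).natDegree ≤ d) : g.det.natDegree ≤ n * d := by
  rw [Matrix.det_apply]
  refine natDegree_sum_le_of_forall_le _ _ fun σ _ => (natDegree_smul_le _ _).trans ?_
  refine (natDegree_prod_le _ _).trans ((Finset.sum_le_sum fun i _ => h (σ i) i).trans ?_)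
  simp

theorem natDegree_pencil_entry_le {d : ℕ} (c : Fin (d + 1) → ℂ) :
    (∑ k : Fin (d + 1), C (c k) * X ^ (k : ℕ)).natDegree ≤ d :=
  natDegree_sum_le_of_forall_le _ _ fun k _ =>
    (natDegree_C_mul_X_pow_le _ _).trans (Nat.lt_succ_iff.mp k.2)

/-- The pencil obtained from `𝒜_ε` by the substitution `X ↦ ε^γ X` and by the diagonal scalings
`ε^{-U}` and `ε^{-V}` of the rows and columns. -/
def scaledPencil {n d : ℕ} (𝒜 : ℝ → Fin (d + 1) → Matrix (Fin n) (Fin n) ℂ) (γ : ℝ)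
    (U V : Fin n → ℝ) (ε : ℝ) : Matrix (Fin n) (Fin n) ℂ[X] :=
  fun i j => ∑ k : Fin (d + 1),
    C (𝒜 ε k i j * ((ε ^ (((k : ℕ) : ℝ) * γ - U i - V j) : ℝ) : ℂ)) * X ^ (k : ℕ)

theorem det_scaledPencil {n d : ℕ} (𝒜 : ℝ → Fin (d + 1) → Matrix (Fin n) (Fin n) ℂ) (γ : ℝ)
    (U V : Fin n → ℝ) {ε : ℝ} (hε : 0 < ε) :
    (scaledPencil 𝒜 γ U V ε).det =
      C ((∏ i, ((ε ^ (-U i) : ℝ) : ℂ)) * ∏ j, ((ε ^ (-V j) : ℝ) : ℂ)) *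
        (pencilPoly 𝒜 ε).comp (C ((ε ^ γ : ℝ) : ℂ) * X + C 0) := by
  have hcomp : (pencilPoly 𝒜 ε).comp (C ((ε ^ γ : ℝ) : ℂ) * X + C 0) =
      Matrix.det (Matrix.of fun i j =>
        (∑ k : Fin (d + 1), C (𝒜 ε k i j) * X ^ (k : ℕ)).comp
          (C ((ε ^ γ : ℝ) : ℂ) * X + C 0)) := by
    exact RingHom.map_det (compRingHom (C ((ε ^ γ : ℝ) : ℂ) * X + C 0))
      (Matrix.of fun i j => ∑ k : Fin (d + 1), C (𝒜 ε k i j) * X ^ (k : ℕ))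
  rw [hcomp, C_mul, map_prod, map_prod, mul_assoc, ← Matrix.det_mul_row, ← Matrix.det_mul_column]
  congr 1
  ext1 i j
  simp only [scaledPencil, Matrix.of_apply, Polynomial.sum_comp, Finset.mul_sum]
  refine Finset.sum_congr rfl fun k _ => ?_
  have hpow : ε ^ (((k : ℕ) : ℝ) * γ - U i - V j) =
      ε ^ (-U i) * ε ^ (-V j) * (ε ^ γ) ^ (k : ℕ) := by
    rw [← Real.rpow_mul_natCast hε.le, ← Real.rpow_add hε, ← Real.rpow_add hε]
    ring_nf
  rw [hpow]
  simp only [mul_comp, C_comp, pow_comp, X_comp, map_zero, add_zero, Complex.ofReal_mul,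
    Complex.ofReal_pow, C_mul, C_pow, mul_pow]
  ring

/-- The roots of the scaled pencil, multiplied by `ε^γ`, are the eigenvalues of `𝒜_ε`. -/
theorem map_roots_det_scaledPencil {n d : ℕ} (𝒜 : ℝ → Fin (d + 1) → Matrix (Fin n) (Fin n) ℂ)
    (γ : ℝ) (U V : Fin n → ℝ) {ε : ℝ} (hε : 0 < ε) :
    (scaledPencil 𝒜 γ U V ε).det.roots.map (fun x => ((ε ^ γ : ℝ) : ℂ) * x) =
      (pencilPoly 𝒜 ε).roots := by
  have hne : ∀ t : ℝ, ((ε ^ t : ℝ) : ℂ) ≠ 0 := fun t =>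
    Complex.ofReal_ne_zero.mpr (Real.rpow_pos_of_pos hε t).ne'
  rw [det_scaledPencil 𝒜 γ U V hε, roots_C_mul _ (mul_ne_zero
    (Finset.prod_ne_zero_iff.mpr fun i _ => hne _) (Finset.prod_ne_zero_iff.mpr fun i _ => hne _))]
  simpa using map_roots_comp_C_mul_X_add_C (pencilPoly 𝒜 ε) _ 0 (hne γ).isUnit

theorem tendsto_rpow_nhdsGT_zero {s : ℝ} (hs : 0 < s) :
    Tendsto (fun ε : ℝ => ε ^ s) (𝓝[>] 0) (𝓝 0) := by
  have := (Real.continuousAt_rpow_const 0 s (Or.inr hs.le)).tendsto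
  rw [Real.zero_rpow hs.ne'] at this
  exact this.mono_left nhdsWithin_le_nhds

/-- The coefficients of the scaled pencil converge to those of the auxiliary pencil. -/
theorem tendsto_scaled_entry {n d : ℕ} {𝒜 : ℝ → Fin (d + 1) → Matrix (Fin n) (Fin n) ℂ}
    {a : Fin (d + 1) → Matrix (Fin n) (Fin n) ℂ}
    {A : Fin (d + 1) → Matrix (Fin n) (Fin n) Rmin} (hasym : HasAsymptotics 𝒜 a A) {γ : ℝ}
    {U V : Fin n → ℝ} (hUV : ∀ i j, ((U i + V j : ℝ) : Rmin) ≤ AhatMat A γ i j)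
    (k : Fin (d + 1)) (i j : Fin n) :
    Tendsto (fun ε : ℝ => 𝒜 ε k i j * ((ε ^ (((k : ℕ) : ℝ) * γ - U i - V j) : ℝ) : ℂ))
      (𝓝[>] 0) (𝓝 (restrictG (a k) (SatK A γ U V k) i j)) := by
  have hle : AhatMat A γ i j ≤ A k i j + ((((k : ℕ) : ℝ) * γ : ℝ) : Rmin) :=
    Finset.inf_le (f := fun k : Fin (d + 1) => A k i j + ((((k : ℕ) : ℝ) * γ : ℝ) : Rmin))
      (Finset.mem_univ k)
  have hsat : SatK A γ U V k i j ↔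
      A k i j + ((((k : ℕ) : ℝ) * γ : ℝ) : Rmin) = ((U i + V j : ℝ) : Rmin) := by
    refine ⟨fun h => h.2.trans h.1, fun h => ?_⟩
    have heq : AhatMat A γ i j = ((U i + V j : ℝ) : Rmin) :=
      le_antisymm (hle.trans h.le) (hUV i j)
    exact ⟨heq, h.trans heq.symm⟩
  rcases hA : A k i j with _ | t
  · have hA' : A k i j = ⊤ := hA
    have hnot : ¬ SatK A γ U V k i j := by
      rw [hsat, hA', top_add]
      exact WithTop.top_ne_coe
    rw [restrictG, if_neg hnot]
    refine tendsto_const_nhds.congr' ?_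
    filter_upwards [(hasym k i j).1 hA'] with ε hε
    rw [hε, zero_mul]
  · have hA' : A k i j = (t : Rmin) := hA
    rw [hA', ← WithTop.coe_add, WithTop.coe_inj] at hsat
    have hge : U i + V j ≤ t + ((k : ℕ) : ℝ) * γ := by
      have := (hUV i j).trans hle
      rwa [hA', ← WithTop.coe_add, WithTop.coe_le_coe] at this
    have hnorm := (((hasym k i j).2 t hA').tendsto_inv_smul_nhds_zero).add_const (a k i j)
    rw [zero_add] at hnorm
    have hfactor : (fun ε : ℝ => ((ε ^ t)⁻¹ • (𝒜 ε k i j - a k i j * ((ε ^ t : ℝ) : ℂ)) +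
        a k i j) * ((ε ^ (t + ((k : ℕ) : ℝ) * γ - (U i + V j)) : ℝ) : ℂ)) =ᶠ[𝓝[>] 0]
        fun ε : ℝ => 𝒜 ε k i j * ((ε ^ (((k : ℕ) : ℝ) * γ - U i - V j) : ℝ) : ℂ) := by
      filter_upwards [self_mem_nhdsWithin] with ε hε
      have ht : ((ε ^ t : ℝ) : ℂ) ≠ 0 :=
        Complex.ofReal_ne_zero.mpr (Real.rpow_pos_of_pos hε t).ne'
      have hexp : t + ((k : ℕ) : ℝ) * γ - (U i + V j) =
          t + (((k : ℕ) : ℝ) * γ - U i - V j) := by ring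
      rw [hexp, Real.rpow_add hε, Complex.real_smul, Complex.ofReal_inv, Complex.ofReal_mul]
      field_simp
      ring
    refine Tendsto.congr' hfactor ?_
    rcases hge.eq_or_lt with heq | hlt
    · rw [restrictG, if_pos (hsat.mpr heq.symm)]
      simpa [heq] using hnorm
    · rw [restrictG, if_neg fun h => hlt.ne' (hsat.mp h)]
      have hpow := (Complex.continuous_ofReal.tendsto 0).comp
        (tendsto_rpow_nhdsGT_zero (sub_pos.mpr hlt))
      simpa using hnorm.mul hpow


/-- **Theorem 1 (first part, with `G_k = Sat_k(γ,U,V)`).**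
Let `γ ∈ ℝ` be a finite corner of the min-plus characteristic polynomial `P_A`, let
`(U, V)` be any Hungarian pair with respect to `Â(γ)`, and let `a^{(γ)}` be the auxiliary
pencil built with the graphs `G_k = Sat_k(γ, U, V)`.  If `det a^{(γ)} ∈ ℂ[X]` has nonzero
roots `λ_1, …, λ_m` (with multiplicity), then there are `ε₀ > 0` and functions
`L_1, …, L_m : (0, ε₀) → ℂ` such that for every `ε ∈ (0, ε₀)` the multiset
`{L_1 ε, …, L_m ε}` is a sub-multiset of the roots of `det 𝒜_ε` (with multiplicity),
and `ε^{-γ} L_i ε → λ_i` as `ε → 0⁺`. -/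
theorem mainTheorem_sat_part
    (n d : ℕ) (hn : 1 ≤ n)
    (𝒜 : ℝ → Fin (d + 1) → Matrix (Fin n) (Fin n) ℂ)
    (a : Fin (d + 1) → Matrix (Fin n) (Fin n) ℂ)
    (A : Fin (d + 1) → Matrix (Fin n) (Fin n) Rmin)
    (hcont : ∀ k i j, ContinuousOn (fun ε : ℝ => 𝒜 ε k i j) (Set.Ioi 0))
    (hasym : HasAsymptotics 𝒜 a A)
    (γ : ℝ) (hγ : IsFiniteCorner A γ)
    (U V : Fin n → ℝ) (hUV : HungarianPair (AhatMat A γ) U V)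
    (m : ℕ) (lam : Fin m → ℂ)
    (hlam : ((auxPencil a (SatK A γ U V)).det.roots.filter (· ≠ 0)) =
      Multiset.map lam Finset.univ.val) :
    ∃ ε₀ > (0 : ℝ), ∃ L : Fin m → ℝ → ℂ,
      (∀ ε ∈ Set.Ioo (0 : ℝ) ε₀,
        Multiset.map (fun i => L i ε) Finset.univ.val ≤ (pencilPoly 𝒜 ε).roots) ∧
      ∀ i, Tendsto (fun ε : ℝ => ((ε ^ (-γ) : ℝ) : ℂ) * L i ε) (𝓝[>] (0 : ℝ))
        (𝓝 (lam i)) := by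
  by_cases hq0 : (auxPencil a (SatK A γ U V)).det = 0
  · have hm : m = 0 := by
      have := congrArg Multiset.card hlam
      simpa [hq0] using this.symm
    subst hm
    exact ⟨1, one_pos, fun _ _ => 0, by simp, fun i => i.elim0⟩
  have hcoeff : ∀ k, Tendsto (fun ε => (scaledPencil 𝒜 γ U V ε).det.coeff k) (𝓝[>] 0)
      (𝓝 ((auxPencil a (SatK A γ U V)).det.coeff k)) := by
    refine tendsto_coeff_det fun i j k => ?_
    simp only [scaledPencil, auxPencil, finsetSum_coeff, coeff_C_mul]
    exact tendsto_finsetSum _ fun l _ => (tendsto_scaled_entry hasym hUV.1 l i j).mul_const _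
  obtain ⟨M, hM, hMlim⟩ := exists_tendsto_roots m (fun ε => (scaledPencil 𝒜 γ U V ε).det)
    (auxPencil a (SatK A γ U V)).det
    (fun ε => natDegree_det_le fun i j => natDegree_pencil_entry_le _)
    (natDegree_det_le fun i j => natDegree_pencil_entry_le _) hcoeff hq0 lam
    (hlam ▸ Multiset.filter_le _ _)
  obtain ⟨ε₀, hε₀, hsub⟩ := mem_nhdsGT_iff_exists_Ioo_subset.mp hM
  refine ⟨ε₀, hε₀, fun i ε => ((ε ^ γ : ℝ) : ℂ) * M i ε, fun ε hε => ?_, fun i => ?_⟩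
  · rw [← map_roots_det_scaledPencil 𝒜 γ U V hε.1]
    have hle : Multiset.map (fun i => M i ε) Finset.univ.val ≤
        (scaledPencil 𝒜 γ U V ε).det.roots := hsub hε
    have := Multiset.map_le_map (f := fun x => ((ε ^ γ : ℝ) : ℂ) * x) hle
    rwa [Multiset.map_map] at this
  · refine (hMlim i).congr' ?_
    filter_upwards [self_mem_nhdsWithin] with ε hε
    rw [← mul_assoc, ← Complex.ofReal_mul, ← Real.rpow_add hε, neg_add_cancel, Real.rpow_zero,
      Complex.ofReal_one, one_mul]
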